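/- Let s ∈ (0,1), u ∈ C_c^∞(ℝⁿ), and let φ ∈ C²(ℝ) be convex with φ(0) = 0. Then for every x ∈ ℝⁿ, (−Δ)^s( φ∘u )(x) ≤ φ'(u(x)) · (−Δ)^s u(x) (the Córdoba–Córdoba inequality). -/

import Mathlib

open MeasureTheory Filter Set
open scoped Topology ENNReal NNReal

noncomputable section

/-- `ℝⁿ` with the Euclidean norm. -/
abbrev En (n : ℕ) := EuclideanSpace ℝ (Fin n)

/-- The normalizing constant `p(n,s) = Γ(n/2+s)/(π^{n/2} Γ(s))` of the Poisson kernel. -/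
def pns (n : ℕ) (s : ℝ) : ℝ :=
  Real.Gamma ((n : ℝ) / 2 + s) / (Real.pi ^ ((n : ℝ) / 2) * Real.Gamma s)

/-- The fractional Poisson kernel `P_z^{(s)}(x) = p(n,s) z^{2s} (|x|² + z²)^{-(n+2s)/2}`. -/
def Pker (n : ℕ) (s z : ℝ) (x : En n) : ℝ :=
  pns n s * z ^ (2 * s) * (‖x‖ ^ 2 + z ^ 2) ^ (-((n : ℝ) + 2 * s) / 2)

/-- Convolution with the fractional Poisson kernel in the first variable, at fixed `z`. -/
def Pconv (n : ℕ) (s z : ℝ) (f : En n → ℝ) (x : En n) : ℝ :=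
  ∫ y, Pker n s z (x - y) * f y

/-- The Caffarelli–Silvestre extension `U(x,z) = (P_z^{(s)} ∗ u)(x)`. -/
def CSext (n : ℕ) (s : ℝ) (u : En n → ℝ) (x : En n) (z : ℝ) : ℝ :=
  Pconv n s z u x

/-- The constant `C(n,s) = 4^s Γ(n/2+s) / (π^{n/2} |Γ(-s)|)`. -/
def Cns (n : ℕ) (s : ℝ) : ℝ :=
  4 ^ s * Real.Gamma ((n : ℝ) / 2 + s) / (Real.pi ^ ((n : ℝ) / 2) * |Real.Gamma (-s)|)

/-- The fractional Laplacian `(-Δ)^s w(x)` as a principal-value singular integral. -/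
def fracLap (n : ℕ) (s : ℝ) (w : En n → ℝ) (x : En n) : ℝ :=
  Cns n s * limUnder (𝓝[>] (0 : ℝ))
    (fun ε : ℝ => ∫ y in {y : En n | ε < ‖x - y‖}, (w x - w y) / ‖x - y‖ ^ ((n : ℝ) + 2 * s))

/-- `Λ^s w := -(-Δ)^s w`. -/
def Lam (n : ℕ) (s : ℝ) (w : En n → ℝ) (x : En n) : ℝ := - fracLap n s w x

/-- The first-order carré du champ `Γ₁(u,v) = ½(Λ^s(uv) - u Λ^s v - v Λ^s u)`. -/
def Gamma1 (n : ℕ) (s : ℝ) (u v : En n → ℝ) (x : En n) : ℝ :=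
  (Lam n s (fun y => u y * v y) x - u x * Lam n s v x - v x * Lam n s u x) / 2

/-- The constant `β_s = 2^{2s-1} Γ(s)/Γ(1-s)`. -/
def betaS (s : ℝ) : ℝ := 2 ^ (2 * s - 1) * Real.Gamma s / Real.Gamma (1 - s)

/-- Partial derivative in the `i`-th coordinate direction. -/
def pd {n : ℕ} (i : Fin n) (f : En n → ℝ) (x : En n) : ℝ :=
  fderiv ℝ f x (EuclideanSpace.single i 1)

/-- The Laplacian in the `x`-variables. -/
def lapX {n : ℕ} (f : En n → ℝ) (x : En n) : ℝ := ∑ i, pd i (pd i f) x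

/-- The degenerate operator `L_s W = div_{x,z}(z^{1-2s} ∇̃W)`, written out as
`z^{1-2s} Δ_x W + ∂_z(z^{1-2s} ∂_z W)`. -/
def LsOp {n : ℕ} (s : ℝ) (W : En n → ℝ → ℝ) (x : En n) (z : ℝ) : ℝ :=
  z ^ (1 - 2 * s) * lapX (fun y => W y z) x
    + deriv (fun t => t ^ (1 - 2 * s) * deriv (W x) t) z


/-- Tail of the kernel is integrable. -/
lemma aux_tail (n : ℕ) (hn : 1 ≤ n) (s : ℝ) (hs0 : 0 < s) (ε : ℝ) (hε : 0 < ε) :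
    Integrable (fun z : En n => (Ioi ε).indicator (fun r : ℝ => (r ^ ((n : ℝ) + 2 * s))⁻¹) ‖z‖) := by
  have : Nontrivial (En n) := by
    have : Nonempty (Fin n) := ⟨⟨0, hn⟩⟩
    infer_instance
  rw [integrable_fun_norm_addHaar (volume : Measure (En n))
    (f := (Ioi ε).indicator (fun r : ℝ => (r ^ ((n : ℝ) + 2 * s))⁻¹))]
  have h := (integrableOn_Ioi_rpow_of_lt (a := -1 - 2 * s) (by linarith) hε)
  rw [← integrable_indicator_iff measurableSet_Ioi] at h
  refine h.integrableOn.congr_fun ?_ measurableSet_Ioi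
  intro r hr
  have hr : 0 < r := hr
  by_cases h1 : r ∈ Ioi ε
  · simp only [indicator_of_mem h1, smul_eq_mul, finrank_euclideanSpace, Fintype.card_fin]
    rw [← Real.rpow_natCast, ← Real.rpow_neg hr.le, ← Real.rpow_add hr]
    congr 1
    rw [Nat.cast_sub hn]; push_cast; ring
  · simp [indicator_of_notMem h1]

/-- The kernel times `r²` is integrable near the origin. -/
lemma aux_near (n : ℕ) (hn : 1 ≤ n) (s : ℝ) (hs1 : s < 1) :
    Integrable (fun z : En n =>
      (Iic (1:ℝ)).indicator (fun r : ℝ => r ^ 2 * (r ^ ((n : ℝ) + 2 * s))⁻¹) ‖z‖) := by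
  have : Nontrivial (En n) := by
    have : Nonempty (Fin n) := ⟨⟨0, hn⟩⟩
    infer_instance
  rw [integrable_fun_norm_addHaar (volume : Measure (En n))
    (f := (Iic (1:ℝ)).indicator (fun r : ℝ => r ^ 2 * (r ^ ((n : ℝ) + 2 * s))⁻¹))]
  have h := (intervalIntegral.intervalIntegrable_rpow' (a := 0) (b := 1)
    (r := 1 - 2 * s) (by linarith)).1
  rw [← integrable_indicator_iff measurableSet_Ioc] at h
  refine h.integrableOn.congr_fun ?_ measurableSet_Ioi
  intro r hr
  have hr : 0 < r := hr
  by_cases h1 : r ∈ Iic (1:ℝ)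
  · have h2 : r ∈ Ioc (0:ℝ) 1 := ⟨hr, h1⟩
    simp only [indicator_of_mem h1, indicator_of_mem h2, smul_eq_mul, finrank_euclideanSpace,
      Fintype.card_fin]
    rw [← Real.rpow_natCast, ← Real.rpow_natCast, ← Real.rpow_neg hr.le, ← Real.rpow_add hr,
      ← Real.rpow_add hr]
    congr 1
    rw [Nat.cast_sub hn]; push_cast; ring
  · have h2 : r ∉ Ioc (0:ℝ) 1 := fun h => h1 h.2
    simp [indicator_of_notMem h1, indicator_of_notMem h2]

/-- Second difference bound. -/
lemma aux_second (n : ℕ) (w : En n → ℝ) (hw : ContDiff ℝ 2 w) (hwc : HasCompactSupport w)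
    (x : En n) : ∃ K : ℝ, 0 ≤ K ∧ ∀ z : En n, |2 * w x - w (x - z) - w (x + z)| ≤ K * ‖z‖ ^ 2 := by
  have hd : ContDiff ℝ 1 (fderiv ℝ w) := hw.fderiv_right (by norm_num)
  obtain ⟨K, hK⟩ := hd.lipschitzWith_of_hasCompactSupport (hwc.fderiv (𝕜 := ℝ)) (by norm_num)
  refine ⟨2 * K, by positivity, fun z => ?_⟩
  have hdiff : Differentiable ℝ w := hw.differentiable (by norm_num)
  have key := (convex_closedBall (0 : En n) ‖z‖).norm_image_sub_le_of_norm_hasFDerivWithin_le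
    (𝕜 := ℝ) (f := fun z => w (x - z) + w (x + z))
    (f' := fun z => -(fderiv ℝ w (x - z)) + fderiv ℝ w (x + z))
    (C := 2 * K * ‖z‖) (x := 0) (y := z) ?_ ?_ (by simp) (by simp)
  · simp only [sub_zero, add_zero, Real.norm_eq_abs] at key
    calc _ = |w (x - z) + w (x + z) - (w x + w x)| := by rw [← abs_neg]; congr 1; ring
      _ ≤ _ := key
      _ = _ := by ring
  · intro v _
    have h1 : HasFDerivAt (fun z => w (x - z)) (-(fderiv ℝ w (x - v))) v := by
      have := (hdiff (x - v)).hasFDerivAt.comp v ((hasFDerivAt_id v).const_sub x)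
      exact this.congr_fderiv (by ext1 t; simp)
    have h2 : HasFDerivAt (fun z => w (x + z)) (fderiv ℝ w (x + v)) v := by
      have := (hdiff (x + v)).hasFDerivAt.comp v ((hasFDerivAt_id v).const_add x)
      exact this.congr_fderiv (by ext1 t; simp)
    exact (h1.add h2).hasFDerivWithinAt
  · intro v hv
    have hv : ‖v‖ ≤ ‖z‖ := by simpa using hv
    have := hK.dist_le_mul (x + v) (x - v)
    rw [dist_eq_norm, dist_eq_norm] at this
    rw [neg_add_eq_sub]
    refine this.trans ?_
    have e : x + v - (x - v) = (2:ℝ) • v := by rw [two_smul]; abel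
    rw [e, norm_smul]
    have hK0 : (0:ℝ) ≤ K := K.2
    simp only [Real.norm_ofNat]
    nlinarith [mul_le_mul_of_nonneg_left hv hK0]

lemma aux_bound (n : ℕ) (w : En n → ℝ) (hw : ContDiff ℝ 2 w) (hwc : HasCompactSupport w) :
    ∃ M : ℝ, 0 ≤ M ∧ ∀ y, |w y| ≤ M := by
  obtain ⟨M, hM⟩ := hwc.exists_bound_of_continuous hw.continuous
  exact ⟨M, (norm_nonneg _).trans (hM 0), hM⟩

/-- Integrability of truncated integrand (in the `z` variable). -/
lemma aux_trunc (n : ℕ) (hn : 1 ≤ n) (s : ℝ) (hs0 : 0 < s)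
    (w : En n → ℝ) (hw : ContDiff ℝ 2 w) (hwc : HasCompactSupport w) (x : En n)
    (ε : ℝ) (hε : 0 < ε) :
    Integrable (fun z : En n => {z : En n | ε < ‖z‖}.indicator
      (fun z => (w x - w (x - z)) / ‖z‖ ^ ((n : ℝ) + 2 * s)) z) := by
  obtain ⟨M, hM0, hM⟩ := aux_bound n w hw hwc
  refine ((aux_tail n hn s hs0 ε hε).const_mul (2 * M)).mono' ?_ ?_
  · have hc := hw.continuous
    have hm : Measurable (fun z : En n => (w x - w (x - z)) / ‖z‖ ^ ((n : ℝ) + 2 * s)) := by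
      have : Measurable fun z : En n => w (x - z) := by
        apply Continuous.measurable; fun_prop
      fun_prop
    exact (hm.indicator (measurableSet_lt measurable_const measurable_norm)).aestronglyMeasurable
  · refine Eventually.of_forall fun z => ?_
    by_cases h : ε < ‖z‖
    · have h' : z ∈ {z : En n | ε < ‖z‖} := h
      have h'' : ‖z‖ ∈ Ioi ε := h
      rw [indicator_of_mem h', indicator_of_mem h'', norm_div, div_eq_mul_inv]
      have hp : 0 ≤ ‖z‖ ^ ((n : ℝ) + 2 * s) := by positivity
      rw [Real.norm_of_nonneg hp]
      gcongr
      have h1 := abs_le.1 (hM x)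
      have h2 := abs_le.1 (hM (x - z))
      rw [Real.norm_eq_abs, abs_le]; constructor <;> linarith
    · have h' : z ∉ {z : En n | ε < ‖z‖} := h
      have h'' : ‖z‖ ∉ Ioi ε := h
      rw [indicator_of_notMem h', indicator_of_notMem h'']; simp

lemma aux_change (n : ℕ) (s : ℝ) (w : En n → ℝ) (x : En n) (ε : ℝ) :
    (fun y : En n => {y : En n | ε < ‖x - y‖}.indicator
      (fun y => (w x - w y) / ‖x - y‖ ^ ((n : ℝ) + 2 * s)) y) =
    fun y => (fun z : En n => {z : En n | ε < ‖z‖}.indicator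
      (fun z => (w x - w (x - z)) / ‖z‖ ^ ((n : ℝ) + 2 * s)) z) (x - y) := by
  funext y
  simp [indicator]

lemma aux_integrableOn (n : ℕ) (hn : 1 ≤ n) (s : ℝ) (hs0 : 0 < s)
    (w : En n → ℝ) (hw : ContDiff ℝ 2 w) (hwc : HasCompactSupport w) (x : En n)
    (ε : ℝ) (hε : 0 < ε) :
    IntegrableOn (fun y => (w x - w y) / ‖x - y‖ ^ ((n : ℝ) + 2 * s))
      {y : En n | ε < ‖x - y‖} := by
  have hm : MeasurableSet {y : En n | ε < ‖x - y‖} :=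
    measurableSet_lt measurable_const (by fun_prop)
  rw [← integrable_indicator_iff hm]
  have := (aux_trunc n hn s hs0 w hw hwc x ε hε).comp_sub_left x
  rwa [← aux_change] at this

lemma aux_tendsto (n : ℕ) (hn : 1 ≤ n) (s : ℝ) (hs0 : 0 < s) (hs1 : s < 1)
    (w : En n → ℝ) (hw : ContDiff ℝ 2 w) (hwc : HasCompactSupport w) (x : En n) :
    ∃ L : ℝ, Tendsto (fun ε : ℝ => ∫ y in {y : En n | ε < ‖x - y‖},
      (w x - w y) / ‖x - y‖ ^ ((n : ℝ) + 2 * s)) (𝓝[>] (0 : ℝ)) (𝓝 L) := by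
  obtain ⟨M, hM0, hM⟩ := aux_bound n w hw hwc
  obtain ⟨K, hK0, hK⟩ := aux_second n w hw hwc x
  set g : En n → ℝ := fun z => (2 * w x - w (x - z) - w (x + z)) / ‖z‖ ^ ((n : ℝ) + 2 * s) with hg
  have hc := hw.continuous
  have hgm : Measurable g := by
    have h1 : Measurable fun z : En n => w (x - z) := by
      apply Continuous.measurable; fun_prop
    have h2 : Measurable fun z : En n => w (x + z) := by
      apply Continuous.measurable; fun_prop
    fun_prop
  have hgi : Integrable g := by
    refine (((aux_tail n hn s hs0 1 one_pos).const_mul (4 * M)).add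
      ((aux_near n hn s hs1).const_mul K)).mono' hgm.aestronglyMeasurable ?_
    refine Eventually.of_forall fun z => ?_
    have hp : 0 ≤ ‖z‖ ^ ((n : ℝ) + 2 * s) := by positivity
    simp only [hg, Pi.add_apply]
    rw [norm_div, Real.norm_of_nonneg hp, div_eq_mul_inv]
    by_cases h : 1 < ‖z‖
    · have h1 : ‖z‖ ∈ Ioi (1:ℝ) := h
      have h2 : ‖z‖ ∉ Iic (1:ℝ) := not_le.2 h
      rw [indicator_of_mem h1, indicator_of_notMem h2, mul_zero, add_zero]
      gcongr
      have h1 := abs_le.1 (hM x)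
      have h2 := abs_le.1 (hM (x - z))
      have h3 := abs_le.1 (hM (x + z))
      rw [Real.norm_eq_abs, abs_le]; constructor <;> linarith
    · have h1 : ‖z‖ ∉ Ioi (1:ℝ) := h
      have h2 : ‖z‖ ∈ Iic (1:ℝ) := not_lt.1 h
      rw [indicator_of_notMem h1, indicator_of_mem h2, mul_zero, zero_add, ← mul_assoc]
      gcongr
      exact hK z
  have hms : ∀ ε : ℝ, MeasurableSet {z : En n | ε < ‖z‖} := fun ε =>
    measurableSet_lt measurable_const measurable_norm
  have hlim : Tendsto (fun ε : ℝ => ∫ z, {z : En n | ε < ‖z‖}.indicator g z) (𝓝[>] (0 : ℝ))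
      (𝓝 (∫ z, g z)) := by
    refine tendsto_integral_filter_of_dominated_convergence (fun z => ‖g z‖) ?_ ?_ hgi.norm ?_
    · exact Eventually.of_forall fun ε => (hgm.indicator (hms ε)).aestronglyMeasurable
    · exact Eventually.of_forall fun ε => Eventually.of_forall fun z => norm_indicator_le_norm_self _ _
    · refine Eventually.of_forall fun z => ?_
      by_cases hz : z = 0
      · have : g z = 0 := by simp [hg, hz, two_mul]
        have h2 : ∀ ε : ℝ, {z : En n | ε < ‖z‖}.indicator g z = 0 := fun ε => by
          simp [indicator, this]
        simp [h2, this]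
      · refine tendsto_const_nhds.congr' ?_
        have : Iio ‖z‖ ∈ 𝓝[>] (0:ℝ) := mem_nhdsWithin_of_mem_nhds (Iio_mem_nhds (norm_pos_iff.2 hz))
        filter_upwards [this] with ε hε
        have h' : z ∈ {z : En n | ε < ‖z‖} := hε
        rw [indicator_of_mem h']
  refine ⟨(∫ z, g z) / 2, (hlim.div_const 2).congr' ?_⟩
  filter_upwards [self_mem_nhdsWithin] with ε hε
  have hε : 0 < ε := hε
  have hm : MeasurableSet {y : En n | ε < ‖x - y‖} :=
    measurableSet_lt measurable_const (by fun_prop)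
  rw [← integral_indicator hm]
  have e1 := congrArg (fun f : En n → ℝ => ∫ y, f y) (aux_change n s w x ε)
  simp only at e1
  rw [e1]
  set F : En n → ℝ := fun z : En n => {z : En n | ε < ‖z‖}.indicator
      (fun z => (w x - w (x - z)) / ‖z‖ ^ ((n : ℝ) + 2 * s)) z with hF
  have hFi : Integrable F := aux_trunc n hn s hs0 w hw hwc x ε hε
  change _ = ∫ y, F (x - y)
  rw [integral_sub_left_eq_self F volume x]
  have e2 : ∀ z, {z : En n | ε < ‖z‖}.indicator g z = F z + F (-z) := by
    intro z
    by_cases h : ε < ‖z‖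
    · simp only [hF, hg, indicator, mem_ofPred_eq, h, norm_neg, if_true, sub_neg_eq_add]
      ring
    · simp [hF, indicator, h]
  simp_rw [e2]
  rw [integral_add hFi hFi.comp_neg, integral_neg_eq_self F]
  ring

lemma aux_Cns (n : ℕ) (s : ℝ) (hs0 : 0 < s) : 0 ≤ Cns n s := by
  unfold Cns
  have : 0 < Real.Gamma ((n : ℝ) / 2 + s) := Real.Gamma_pos_of_pos (by positivity)
  positivity

lemma aux_convex (φ : ℝ → ℝ) (hφ : ContDiff ℝ 2 φ) (hφconv : ConvexOn ℝ univ φ) (a b : ℝ) :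
    φ a - φ b ≤ deriv φ a * (a - b) := by
  have hd : DifferentiableAt ℝ φ a := hφ.differentiable (by norm_num) a
  rcases lt_trichotomy a b with h | h | h
  · have := hφconv.deriv_le_slope (mem_univ a) (mem_univ b) h hd
    rw [slope_def_field, le_div_iff₀ (by linarith)] at this
    linarith
  · simp [h]
  · have := hφconv.slope_le_deriv (mem_univ b) (mem_univ a) h hd
    rw [slope_def_field, div_le_iff₀ (by linarith)] at this
    linarith

/-- **Córdoba–Córdoba inequality** on `ℝⁿ`: for convex `φ ∈ C²(ℝ)` with `φ(0)=0` and
`u ∈ C_c^∞(ℝⁿ)`, one has `(-Δ)^s(φ∘u) ≤ φ'(u)·(-Δ)^s u` pointwise. -/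
theorem Cordoba_Cordoba_inequality (n : ℕ) (hn : 1 ≤ n) (s : ℝ) (hs0 : 0 < s) (hs1 : s < 1)
    (u : En n → ℝ) (hu : ContDiff ℝ (⊤ : ℕ∞) u) (huc : HasCompactSupport u)
    (φ : ℝ → ℝ) (hφ : ContDiff ℝ 2 φ) (hφconv : ConvexOn ℝ univ φ) (hφ0 : φ 0 = 0) :
    ∀ x : En n, fracLap n s (fun y => φ (u y)) x ≤ deriv φ (u x) * fracLap n s u x := by
  intro x
  have hu2 : ContDiff ℝ 2 u := hu.of_le (WithTop.coe_le_coe.2 (le_top : (2 : ℕ∞) ≤ ⊤))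
  have hw : ContDiff ℝ 2 (fun y => φ (u y)) := hφ.comp hu2
  have hwc : HasCompactSupport (fun y => φ (u y)) := huc.comp_left hφ0
  obtain ⟨L1, h1⟩ := aux_tendsto n hn s hs0 hs1 _ hw hwc x
  obtain ⟨L2, h2⟩ := aux_tendsto n hn s hs0 hs1 u hu2 huc x
  unfold fracLap
  rw [h1.limUnder_eq, h2.limUnder_eq]
  have hle : L1 ≤ deriv φ (u x) * L2 := by
    refine le_of_tendsto_of_tendsto h1 (h2.const_mul _) ?_
    filter_upwards [self_mem_nhdsWithin] with ε hε
    rw [← integral_const_mul]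
    refine integral_mono (aux_integrableOn n hn s hs0 _ hw hwc x ε hε)
      ((aux_integrableOn n hn s hs0 u hu2 huc x ε hε).const_mul _) fun y => ?_
    simp only
    rw [← mul_div_assoc]
    gcongr
    exact aux_convex φ hφ hφconv _ _
  calc _ ≤ Cns n s * (deriv φ (u x) * L2) := mul_le_mul_of_nonneg_left hle (aux_Cns n s hs0)
    _ = _ := by ring
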